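/- arXiv:2002.02430 — 7 statements merged into one kernel-verified Lean document; each statement's English description precedes it below -/
import Mathlib

section
/- Let I and T be nonempty finite sets, and let Ω be a finite set equipped with nonnegative weights w : Ω → ℝ summing to 1 (expectations E_ω denote w-weighted sums over Ω). Let r : I → ℝ and α : I → ℝ be nonnegative, let β > 0 be real, let ALG be a real number, let θ : I → ℝ be nonnegative, let λ : Ω × T → ℝ be nonnegative, and for each ω ∈ Ω let (P_i(ω))_{i∈I} be a family of pairwise disjoint finite subsets of T. Suppose (1) Σ_{i∈I} θ_i + Σ_{t∈T} E_ω[λ(ω,t)] ≤ β·ALG, and (2) for every i ∈ I, θ_i + E_ω[ Σ_{t∈P_i(ω)} λ(ω,t) ] ≥ α_i · r_i · E_ω[ |P_i(ω)| ]. Then ALG ≥ (min_{i∈I} α_i / β) · Σ_{i∈I} r_i · E_ω[ |P_i(ω)| ]. -/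
/-!
Summing the pseudo-reward constraints (2) over all resources bounds `min_i α_i` times the
benchmark's reward by `∑ i, θ i` plus the `λ`-values of the arrivals the benchmark assigns. On each
sample path an arrival is assigned to at most one resource and `λ ≥ 0`, so the second part is at
most the total of all `λ`-values, and the budget constraint (1) concludes.
-/

section OrderedSums

variable {ι τ R : Type*}

theorem sum_sum_le_sum_of_pairwiseDisjoint [AddCommMonoid R] [PartialOrder R]
    [IsOrderedAddMonoid R] {s : Finset ι} {u : Finset τ} {P : ι → Finset τ} {f : τ → R}
    (hdisj : (s : Set ι).PairwiseDisjoint P) (hsub : ∀ i ∈ s, P i ⊆ u) (hf : ∀ t ∈ u, 0 ≤ f t) :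
    ∑ i ∈ s, ∑ t ∈ P i, f t ≤ ∑ t ∈ u, f t := by
  classical
  rw [← Finset.sum_biUnion hdisj]
  exact Finset.sum_le_sum_of_subset_of_nonneg (Finset.biUnion_subset.2 hsub) fun t ht _ ↦ hf t ht

theorem inf'_mul_sum_le_sum_mul [NonUnitalNonAssocSemiring R] [SemilatticeInf R]
    [IsOrderedAddMonoid R] [MulPosMono R] {s : Finset ι} (hs : s.Nonempty) (a : ι → R) {x : ι → R}
    (hx : ∀ i ∈ s, 0 ≤ x i) :
    s.inf' hs a * ∑ i ∈ s, x i ≤ ∑ i ∈ s, a i * x i := by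
  rw [Finset.mul_sum]
  exact Finset.sum_le_sum fun i hi ↦ mul_le_mul_of_nonneg_right (Finset.inf'_le a hi) (hx i hi)

theorem sum_sum_mul_sum_le_of_pairwiseDisjoint {Ω : Type*} [NonUnitalNonAssocSemiring R]
    [PartialOrder R] [IsOrderedAddMonoid R] [PosMulMono R]
    {s : Finset ι} {u : Finset τ} {v : Finset Ω} {w : Ω → R}
    {P : Ω → ι → Finset τ} {f : Ω → τ → R} (hw : ∀ ω ∈ v, 0 ≤ w ω)
    (hdisj : ∀ ω ∈ v, (s : Set ι).PairwiseDisjoint (P ω)) (hsub : ∀ ω ∈ v, ∀ i ∈ s, P ω i ⊆ u)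
    (hf : ∀ ω ∈ v, ∀ t ∈ u, 0 ≤ f ω t) :
    ∑ i ∈ s, ∑ ω ∈ v, w ω * ∑ t ∈ P ω i, f ω t ≤ ∑ t ∈ u, ∑ ω ∈ v, w ω * f ω t := by
  calc ∑ i ∈ s, ∑ ω ∈ v, w ω * ∑ t ∈ P ω i, f ω t
      = ∑ ω ∈ v, w ω * ∑ i ∈ s, ∑ t ∈ P ω i, f ω t := by
        rw [Finset.sum_comm]
        simp only [Finset.mul_sum]
    _ ≤ ∑ ω ∈ v, w ω * ∑ t ∈ u, f ω t := Finset.sum_le_sum fun ω hω ↦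
        mul_le_mul_of_nonneg_left
          (sum_sum_le_sum_of_pairwiseDisjoint (hdisj ω hω) (hsub ω hω) (hf ω hω)) (hw ω hω)
    _ = ∑ t ∈ u, ∑ ω ∈ v, w ω * f ω t := by
        rw [Finset.sum_comm]
        simp only [Finset.mul_sum]

end OrderedSums

theorem generalized_certificate_general
    {K I T Ω : Type*} [Semifield K] [LinearOrder K] [IsStrictOrderedRing K]
    [Fintype I] [Fintype T] [Fintype Ω] [Nonempty I]
    (w : Ω → K) (hw : ∀ ω, 0 ≤ w ω) (r : I → K) (hr : ∀ i, 0 ≤ r i) (α : I → K)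
    (β : K) (hβ : 0 < β) (ALG : K) (θ : I → K)
    (lam : Ω → T → K) (hlam : ∀ ω t, 0 ≤ lam ω t)
    (P : Ω → I → Finset T) (hdisj : ∀ ω, Pairwise (Function.onFun Disjoint (P ω)))
    (hbudget : ∑ i, θ i + ∑ t, ∑ ω, w ω * lam ω t ≤ β * ALG)
    (hreward : ∀ i, α i * r i * ∑ ω, w ω * ((P ω i).card : K)
      ≤ θ i + ∑ ω, w ω * ∑ t ∈ P ω i, lam ω t) :
    (Finset.univ.inf' Finset.univ_nonempty α / β)
      * ∑ i, r i * ∑ ω, w ω * ((P ω i).card : K) ≤ ALG := by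
  have hbench (i : I) : 0 ≤ r i * ∑ ω, w ω * ((P ω i).card : K) :=
    mul_nonneg (hr i) (Finset.sum_nonneg fun ω _ ↦ mul_nonneg (hw ω) (Nat.cast_nonneg _))
  rw [div_mul_eq_mul_div, div_le_iff₀' hβ]
  calc Finset.univ.inf' Finset.univ_nonempty α * ∑ i, r i * ∑ ω, w ω * ((P ω i).card : K)
      ≤ ∑ i, α i * (r i * ∑ ω, w ω * ((P ω i).card : K)) :=
        inf'_mul_sum_le_sum_mul _ α fun i _ ↦ hbench i
    _ ≤ ∑ i, (θ i + ∑ ω, w ω * ∑ t ∈ P ω i, lam ω t) :=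
        Finset.sum_le_sum fun i _ ↦ (mul_assoc _ _ _).symm.trans_le (hreward i)
    _ = ∑ i, θ i + ∑ i, ∑ ω, w ω * ∑ t ∈ P ω i, lam ω t := Finset.sum_add_distrib
    _ ≤ ∑ i, θ i + ∑ t, ∑ ω, w ω * lam ω t := by
        gcongr ∑ i, θ i + ?_
        exact sum_sum_mul_sum_le_of_pairwiseDisjoint (fun ω _ ↦ hw ω)
          (fun ω _ ↦ (hdisj ω).set_pairwise _) (fun _ _ _ _ ↦ Finset.subset_univ _)
          fun ω _ t _ ↦ hlam ω t
    _ ≤ β * ALG := hbudget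

/-- **Generalized (LP-free) certificate of optimality** (Lemma `certificate`).
Given disjoint families `P ω i` of arrivals (for each sample path `ω`), nonnegative
variables `θ`, `λ` satisfying the budget constraint (1) and the per-resource
pseudo-reward constraints (2), the algorithm's reward `ALG` is at least
`(min_i α_i / β)` times the benchmark's expected reward. -/
theorem generalized_certificate
    {I T Ω : Type*} [Fintype I] [Fintype T] [Fintype Ω]
    [Nonempty I] [Nonempty T]
    (w : Ω → ℝ) (hw0 : ∀ ω, 0 ≤ w ω) (hw1 : ∑ ω, w ω = 1)
    (r : I → ℝ) (hr : ∀ i, 0 ≤ r i)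
    (α : I → ℝ) (hα : ∀ i, 0 ≤ α i)
    (β : ℝ) (hβ : 0 < β) (ALG : ℝ)
    (θ : I → ℝ) (hθ : ∀ i, 0 ≤ θ i)
    (lam : Ω → T → ℝ) (hlam : ∀ ω t, 0 ≤ lam ω t)
    (P : Ω → I → Finset T)
    (hdisj : ∀ ω, ∀ i j, i ≠ j → Disjoint (P ω i) (P ω j))
    (h1 : ∑ i, θ i + ∑ t, ∑ ω, w ω * lam ω t ≤ β * ALG)
    (h2 : ∀ i, θ i + ∑ ω, w ω * ∑ t ∈ P ω i, lam ω t
          ≥ α i * r i * ∑ ω, w ω * ((P ω i).card : ℝ)) :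
    ALG ≥ (Finset.univ.inf' Finset.univ_nonempty α / β)
          * ∑ i, r i * ∑ ω, w ω * ((P ω i).card : ℝ) := by
  exact generalized_certificate_general w hw0 r hr α β hβ ALG θ lam hlam P hdisj h1 h2
end

section
/- Let N be a finite type and let φ : Finset N → N → ℝ be a choice model satisfying 0 ≤ φ(A, i) ≤ 1 for all A and i, and the weak substitution property: for every finite set A ⊆ N, every i ∈ A, and every j ∉ A, φ(A ∪ {j}, i) ≤ φ(A, i). Let S ⊆ N be a finite set with m = |S|, and let p : N → ℝ be target probabilities satisfying 0 ≤ p_s ≤ φ(S, s) for every s ∈ S. Then there exist m assortments A_1, …, A_m with A_k ⊆ S for every k, and weights u_1, …, u_m ∈ [0, 1], such that Σ_{k=1}^{m} u_k ≤ 1 and, for every s ∈ S, Σ_{k : s ∈ A_k} u_k · φ(A_k, s) = p_s. -/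
open Finset

/-!
Offer `S` with increasing weight until the first item `t` reaches its target, at weight `w`, and
then remove `t`. The unmet targets satisfy
`p s - w * φ S s ≤ (1 - w) * φ S s ≤ (1 - w) * φ (S.erase t) s`, the last step being weak
substitution, so the same procedure applies to `S.erase t` with total weight `1 - w`.
-/

section LinearOrderedField

variable {α K : Type*} [Field K] [LinearOrder K] [IsStrictOrderedRing K]

lemma exists_mem_Icc_eq_mul {a b c : K} (hc : 0 ≤ c) (ha : 0 ≤ a) (hac : a ≤ c * b) :
    ∃ r ∈ Set.Icc 0 c, a = r * b := by
  rcases le_or_gt b 0 with hb | hb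
  · have ha_nonpos : a ≤ 0 := hac.trans (mul_nonpos_of_nonneg_of_nonpos hc hb)
    exact ⟨0, ⟨le_rfl, hc⟩, by rw [zero_mul, ha_nonpos.antisymm ha]⟩
  · exact ⟨a / b, ⟨div_nonneg ha hb.le, (div_le_iff₀ hb).mpr hac⟩, (div_mul_cancel₀ a hb.ne').symm⟩

lemma exists_mul_le_and_exists_eq_mul {S : Finset α} {f p : α → K} {c : K} (hS : S.Nonempty)
    (hc : 0 ≤ c) (hf : ∀ s ∈ S, 0 ≤ f s) (hp : ∀ s ∈ S, 0 ≤ p s)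
    (hpf : ∀ s ∈ S, p s ≤ c * f s) :
    ∃ w ∈ Set.Icc 0 c, (∀ s ∈ S, w * f s ≤ p s) ∧ ∃ t ∈ S, p t = w * f t := by
  have hratio : ∀ s ∈ S, ∃ r ∈ Set.Icc 0 c, p s = r * f s := fun s hs =>
    exists_mem_Icc_eq_mul hc (hp s hs) (hpf s hs)
  choose! r hr hpr using hratio
  obtain ⟨t, ht, hmin⟩ := S.exists_min_image r hS
  refine ⟨r t, hr t ht, fun s hs => ?_, t, ht, hpr t ht⟩
  calc
    r t * f s ≤ r s * f s := mul_le_mul_of_nonneg_right (hmin s hs) (hf s hs)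
    _ = p s := (hpr s hs).symm

end LinearOrderedField

/-- Weak substitution for a choice model `φ`, where `φ A i` is the probability of choosing `i` from
the assortment `A`: adding an item never makes an item already offered more likely to be chosen. -/
def WeakSubstitution {N K : Type*} [DecidableEq N] [LE K] (φ : Finset N → N → K) : Prop :=
  ∀ (A : Finset N) (i : N), i ∈ A → ∀ j ∉ A, φ (insert j A) i ≤ φ A i

lemma WeakSubstitution.le_erase {N K : Type*} [DecidableEq N] [LE K] {φ : Finset N → N → K}
    (hφ : WeakSubstitution φ) {S : Finset N} {s t : N} (ht : t ∈ S) (hs : s ∈ S.erase t) :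
    φ S s ≤ φ (S.erase t) s := by
  simpa only [insert_erase ht] using hφ (S.erase t) s hs t (notMem_erase t S)

lemma WeakSubstitution.sub_mul_le_sub_mul_erase {N K : Type*} [DecidableEq N] [Ring K]
    [PartialOrder K] [IsOrderedRing K] {φ : Finset N → N → K} (hφ : WeakSubstitution φ)
    {S : Finset N} {s t : N} {a w c : K} (ht : t ∈ S) (hs : s ∈ S.erase t)
    (hwc : w ≤ c) (ha : a ≤ c * φ S s) :
    a - w * φ S s ≤ (c - w) * φ (S.erase t) s :=
  calc
    a - w * φ S s ≤ c * φ S s - w * φ S s := sub_le_sub_right ha _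
    _ = (c - w) * φ S s := (sub_mul c w _).symm
    _ ≤ (c - w) * φ (S.erase t) s :=
      mul_le_mul_of_nonneg_left (hφ.le_erase ht hs) (sub_nonneg.mpr hwc)

/-- The overall probability of choosing `s` when each assortment `A k` is offered with probability
`u k`. Assortments not containing `s` contribute nothing, whatever value `φ (A k) s` takes. -/
def mixtureProb {N ι K : Type*} [DecidableEq N] [Fintype ι] [NonUnitalNonAssocSemiring K]
    (φ : Finset N → N → K) (A : ι → Finset N) (u : ι → K) (s : N) : K :=
  ∑ k with s ∈ A k, u k * φ (A k) s

section MixtureProb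

variable {N K : Type*} [DecidableEq N] [NonUnitalNonAssocSemiring K] {φ : Finset N → N → K}
  {s : N}

lemma mixtureProb_eq_zero {ι : Type*} [Fintype ι] {A : ι → Finset N} {u : ι → K}
    (hs : ∀ k, s ∉ A k) : mixtureProb φ A u s = 0 := by
  simp [mixtureProb, hs]

lemma mixtureProb_cons_of_mem {n : ℕ} {B : Finset N} {A : Fin n → Finset N} {w : K}
    {u : Fin n → K} (hs : s ∈ B) :
    mixtureProb φ (Fin.cons B A : Fin (n + 1) → Finset N) (Fin.cons w u : Fin (n + 1) → K) s =
      w * φ B s + mixtureProb φ A u s := by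
  simp [mixtureProb, sum_filter, Fin.sum_univ_succ, hs]

end MixtureProb

lemma mixtureProb_cons_eq_of_erase {N K : Type*} [DecidableEq N] [NonUnitalNonAssocRing K]
    {φ : Finset N → N → K} {n : ℕ} {S : Finset N} {t : N} {p : N → K} {w : K} {A : Fin n → Finset N}
    {u : Fin n → K} (hA : ∀ k, A k ⊆ S.erase t) (hpt : p t = w * φ S t)
    (hmatch : ∀ s ∈ S.erase t, mixtureProb φ A u s = p s - w * φ S s) {s : N} (hs : s ∈ S) :
    mixtureProb φ (Fin.cons S A : Fin (n + 1) → Finset N) (Fin.cons w u : Fin (n + 1) → K) s =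
      p s := by
  rw [mixtureProb_cons_of_mem hs]
  rcases eq_or_ne s t with rfl | hst
  · rw [mixtureProb_eq_zero fun k hk => notMem_erase s S (hA k hk), add_zero, hpt]
  · rw [hmatch s (mem_erase.mpr ⟨hst, hs⟩), add_sub_cancel]

section ProbabilityMatching

variable {N K : Type*} [DecidableEq N] [Field K] [LinearOrder K] [IsStrictOrderedRing K]
  {φ : Finset N → N → K}

theorem WeakSubstitution.exists_mixtureProb_eq (hφ : WeakSubstitution φ) {n : ℕ} {S : Finset N}
    {p : N → K} {c : K} (hn : #S = n) (hc : 0 ≤ c) (hφS : ∀ s ∈ S, 0 ≤ φ S s)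
    (hp : ∀ s ∈ S, 0 ≤ p s) (hpφ : ∀ s ∈ S, p s ≤ c * φ S s) :
    ∃ (A : Fin n → Finset N) (u : Fin n → K),
      (∀ k, A k ⊆ S) ∧ (∀ k, 0 ≤ u k) ∧ ∑ k, u k ≤ c ∧ ∀ s ∈ S, mixtureProb φ A u s = p s := by
  induction n generalizing S p c with
  | zero =>
    obtain rfl := card_eq_zero.mp hn
    exact ⟨Fin.elim0, Fin.elim0, Fin.rec0, Fin.rec0, by simpa using hc, by simp⟩
  | succ n ih =>
    have hS : S.Nonempty := card_pos.mp (by lia)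
    obtain ⟨w, ⟨hw, hwc⟩, hwp, t, ht, hpt⟩ := exists_mul_le_and_exists_eq_mul hS hc hφS hp hpφ
    obtain ⟨A, u, hA, hu, hsum, hmatch⟩ :=
      ih (S := S.erase t) (p := fun s => p s - w * φ S s) (c := c - w)
        (by rw [card_erase_of_mem ht, hn, Nat.add_sub_cancel])
        (sub_nonneg.mpr hwc)
        (fun s hs => (hφS s (mem_of_mem_erase hs)).trans (hφ.le_erase ht hs))
        (fun s hs => sub_nonneg.mpr (hwp s (mem_of_mem_erase hs)))
        (fun s hs => hφ.sub_mul_le_sub_mul_erase ht hs hwc (hpφ s (mem_of_mem_erase hs)))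
    refine ⟨Fin.cons S A, Fin.cons w u, ?_, ?_, ?_, ?_⟩
    · exact Fin.cases Subset.rfl fun k => (hA k).trans (erase_subset t S)
    · exact Fin.cases hw hu
    · rw [Fin.sum_cons]
      exact le_sub_iff_add_le'.mp hsum
    · exact fun s hs => mixtureProb_cons_eq_of_erase hA hpt hmatch hs

theorem probability_matching_general (hφ : WeakSubstitution φ) (S : Finset N) (p : N → K)
    (hp0 : ∀ s ∈ S, 0 ≤ p s) (hp1 : ∀ s ∈ S, p s ≤ φ S s) :
    ∃ (A : Fin #S → Finset N) (u : Fin #S → K),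
      (∀ k, A k ⊆ S) ∧ (∀ k, 0 ≤ u k ∧ u k ≤ 1) ∧ ∑ k, u k ≤ 1 ∧
        ∀ s ∈ S, mixtureProb φ A u s = p s := by
  obtain ⟨A, u, hA, hu, hsum, hmatch⟩ := hφ.exists_mixtureProb_eq rfl zero_le_one
    (fun s hs => (hp0 s hs).trans (hp1 s hs)) hp0 (by simpa only [one_mul] using hp1)
  have hu_le_one (k : Fin #S) : u k ≤ 1 :=
    (single_le_sum (fun i _ => hu i) (mem_univ k)).trans hsum
  exact ⟨A, u, hA, fun k => ⟨hu k, hu_le_one k⟩, hsum, hmatch⟩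

end ProbabilityMatching

/-- **Probability Matching** (Lemma `probmatch`). Given a choice model `φ` with values
in `[0,1]` satisfying weak substitution, a finite set `S` and target probabilities
`p s ≤ φ S s` for `s ∈ S`, there are `m = |S|` assortments `A k ⊆ S` and weights
`u k ∈ [0,1]` summing to at most `1` such that each `s ∈ S` is chosen with overall
probability exactly `p s`. -/
theorem probability_matching
    {N : Type*} [Fintype N] [DecidableEq N]
    (φ : Finset N → N → ℝ)
    (hφ0 : ∀ A i, 0 ≤ φ A i) (hφ1 : ∀ A i, φ A i ≤ 1)
    (hsub : ∀ (A : Finset N) (i : N), i ∈ A → ∀ j ∉ A, φ (insert j A) i ≤ φ A i)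
    (S : Finset N) (p : N → ℝ)
    (hp0 : ∀ s ∈ S, 0 ≤ p s) (hp1 : ∀ s ∈ S, p s ≤ φ S s) :
    ∃ (A : Fin S.card → Finset N) (u : Fin S.card → ℝ),
      (∀ k, A k ⊆ S) ∧
      (∀ k, 0 ≤ u k ∧ u k ≤ 1) ∧
      (∑ k, u k ≤ 1) ∧
      (∀ s ∈ S, ∑ k ∈ Finset.univ.filter (fun k => s ∈ A k), u k * φ (A k) s = p s) :=
  probability_matching_general hsub S p hp0 hp1
end

section
/- For every real s ≥ 0 and all reals x, p ∈ [0, 1], it holds that p·(e^{s·x} − 1) ≤ e^{p·x·(e^{s} − 1)} − 1. -/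
theorem exp_mul_sub_one_le_mul_exp_sub_one (s : ℝ) {x : ℝ} (hx0 : 0 ≤ x) (hx1 : x ≤ 1) :
    Real.exp (s * x) - 1 ≤ x * (Real.exp s - 1) := by
  have bernoulli : (1 + (Real.exp s - 1)) ^ x ≤ 1 + x * (Real.exp s - 1) :=
    rpow_one_add_le_one_add_mul_self (by linarith [Real.exp_pos s]) hx0 hx1
  rw [add_sub_cancel, ← Real.exp_mul] at bernoulli
  exact sub_left_le_of_le_add bernoulli

theorem mgf_bound_general (s : ℝ) {x p : ℝ} (hx0 : 0 ≤ x) (hx1 : x ≤ 1) (hp0 : 0 ≤ p) :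
    p * (Real.exp (s * x) - 1) ≤ Real.exp (p * x * (Real.exp s - 1)) - 1 :=
  calc
    p * (Real.exp (s * x) - 1) ≤ p * (x * (Real.exp s - 1)) :=
      mul_le_mul_of_nonneg_left (exp_mul_sub_one_le_mul_exp_sub_one s hx0 hx1) hp0
    _ = p * x * (Real.exp s - 1) := (mul_assoc _ _ _).symm
    _ ≤ Real.exp (p * x * (Real.exp s - 1)) - 1 := le_sub_right_of_add_le (Real.add_one_le_exp _)

/-- **Moment-generating-function bound** (key inequality in Lemma `chernoff2`):
for all `s ≥ 0` and `x, p ∈ [0,1]`, `p(e^{sx} − 1) ≤ e^{p x (e^s − 1)} − 1`. -/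
theorem mgf_bound (s x p : ℝ) (hs : 0 ≤ s)
    (hx0 : 0 ≤ x) (hx1 : x ≤ 1) (hp0 : 0 ≤ p) (hp1 : p ≤ 1) :
    p * (Real.exp (s * x) - 1) ≤ Real.exp (p * x * (Real.exp s - 1)) - 1 :=
  mgf_bound_general s hx0 hx1 hp0
end

section
/- Fix an integer T ≥ 1, real arrival times σ_1 < σ_2 < ⋯ < σ_T, and a nondecreasing function F : ℝ → ℝ with 0 ≤ F(x) ≤ 1 for all x. For probability vectors p, p' ∈ [0,1]^T with p_t ≤ p'_t for every t ∈ {1,…,T}, let η and η' be the availability sequences of the fluid (F, σ, p) and (F, σ, p') processes respectively. Then Σ_{t=1}^{T} p_t · η_t ≤ Σ_{t=1}^{T} p'_t · η'_t. -/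
/-- The availability sequence of the fluid `(F, σ, p)` process (0-based indexing):
`fluidEta F σ p t = 1 − Σ_{τ < t} p τ · fluidEta F σ p τ · (1 − F (σ t − σ τ))`. -/
noncomputable def fluidEta (F : ℝ → ℝ) (σ p : ℕ → ℝ) : ℕ → ℝ
  | t => 1 - ∑ τ ∈ (Finset.range t).attach,
      p τ.1 * fluidEta F σ p τ.1 * (1 - F (σ t - σ τ.1))
  decreasing_by exact Finset.mem_range.mp τ.2

/-!
Let `x = p η` and `x' = p' η'` be the consumptions of the two processes, and price a unit consumed
at `t` by its marginal value `w t = 1 - ∑ u > t, K t u * p' u * w u`: the unit itself, less the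
later consumption it displaces. Summation by parts in the two recurrences gives
`∑ x' - ∑ x = ∑ (p' - p) η w`. Reversing time turns `w` into an availability sequence, so one
nonnegativity argument covers both `η` and `w`.
-/

open Finset OrderDual

section Recurrence

variable {ι R : Type*} [Preorder ι] [CommRing R]

/-- The availability sequence of a fluid process with consumption probabilities `p` and occupancy
kernel `K`: the fraction of a unit consumed at `s` that is still in use at `t > s` is `K s t`. -/
noncomputable def availability [LocallyFiniteOrderBot ι] [WellFoundedLT ι]
    (K : ι → ι → R) (p : ι → R) (t : ι) : R :=
  1 - ∑ s ∈ (Iio t).attach, p s.1 * availability K p s.1 * K s.1 t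
  termination_by wellFounded_lt.wrap t
  decreasing_by exact mem_Iio.mp s.2

theorem availability_eq [LocallyFiniteOrderBot ι] [WellFoundedLT ι]
    (K : ι → ι → R) (p : ι → R) (t : ι) :
    availability K p t = 1 - ∑ s ∈ Iio t, p s * availability K p s * K s t := by
  rw [availability, sum_attach (Iio t) fun s ↦ p s * availability K p s * K s t]

/-- The value of a unit consumed at `t`, net of the later consumption it displaces. It is encoded as
the availability sequence of the time-reversed process. -/
noncomputable def marginalValue [LocallyFiniteOrderTop ι] [WellFoundedGT ι]
    (K : ι → ι → R) (p : ι → R) (t : ι) : R :=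
  availability (fun u s : ιᵒᵈ ↦ K (ofDual s) (ofDual u)) (p ∘ ofDual) (toDual t)

theorem marginalValue_eq [LocallyFiniteOrderTop ι] [WellFoundedGT ι]
    (K : ι → ι → R) (p : ι → R) (t : ι) :
    marginalValue K p t = 1 - ∑ u ∈ Ioi t, p u * marginalValue K p u * K t u := by
  rw [marginalValue, availability_eq, Iio_toDual, sum_map]
  rfl

theorem sum_mul_availability_sub_sum_mul_availability [Fintype ι] [LocallyFiniteOrderBot ι]
    [LocallyFiniteOrderTop ι] (K : ι → ι → R) (p p' : ι → R) :
    ∑ t, p' t * availability K p' t - ∑ t, p t * availability K p t =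
      ∑ t, (p' t - p t) * availability K p t * marginalValue K p' t := by
  set η := availability K p
  set η' := availability K p'
  set w := marginalValue K p'
  let Δ t := p' t * η' t - p t * η t
  have one_eq (t : ι) : 1 = w t + ∑ u ∈ Ioi t, p' u * w u * K t u :=
    eq_add_of_sub_eq (marginalValue_eq K p' t).symm
  have sum_Δ (u : ι) : ∑ t ∈ Iio u, Δ t * K t u = η u - η' u := by
    simp only [Δ, sub_mul, sum_sub_distrib, η, η', availability_eq K _ u, sub_sub_sub_cancel_left]
  calc ∑ t, p' t * η' t - ∑ t, p t * η t
      = ∑ t, Δ t * 1 := by simp only [Δ, mul_one, sum_sub_distrib]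
    _ = ∑ t, Δ t * w t + ∑ t, ∑ u ∈ Ioi t, Δ t * (p' u * w u * K t u) := by
      simp only [← mul_sum, ← sum_add_distrib, ← mul_add, ← one_eq]
    _ = ∑ t, Δ t * w t + ∑ u, ∑ t ∈ Iio u, Δ t * (p' u * w u * K t u) := by
      rw [sum_comm' (t' := univ) (s' := Iio) (by simp)]
    _ = ∑ u, Δ u * w u + ∑ u, p' u * w u * (η u - η' u) := by
      simp only [← sum_Δ, mul_sum, mul_left_comm]
    _ = ∑ u, (p' u - p u) * η u * w u := by
      rw [← sum_add_distrib]
      exact sum_congr rfl fun u _ ↦ by ring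

end Recurrence

section Order

variable {ι R : Type*} [LinearOrder ι] [CommRing R] [PartialOrder R] [IsOrderedRing R]
  {K : ι → ι → R} {p p' : ι → R}

theorem one_sub_mul_availability_le_of_covBy [LocallyFiniteOrderBot ι] [WellFoundedLT ι] {s t : ι}
    (hst : s ⋖ t) (hK : ∀ r < s, K r t ≤ K r s)
    (hpη : ∀ r < s, 0 ≤ p r * availability K p r) :
    (1 - p s * K s t) * availability K p s ≤ availability K p t := by
  have Iio_eq : Iio t = Iic s := coe_injective (by simpa using hst.Iio_eq)
  have sum_le : ∑ r ∈ Iio s, p r * availability K p r * K r t ≤ 1 - availability K p s := by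
    rw [availability_eq K p s, sub_sub_cancel]
    refine sum_le_sum fun r hr ↦ ?_
    have hrs := mem_Iio.mp hr
    exact mul_le_mul_of_nonneg_left (hK r hrs) (hpη r hrs)
  calc (1 - p s * K s t) * availability K p s
      = 1 - (1 - availability K p s + p s * availability K p s * K s t) := by ring
    _ ≤ 1 - (∑ r ∈ Iio s, p r * availability K p r * K r t + p s * availability K p s * K s t) := by
      gcongr
    _ = availability K p t := by
      rw [availability_eq K p t, Iio_eq,
        ← sum_Iio_add_eq_sum_Iic (f := fun r ↦ p r * availability K p r * K r t)]

theorem availability_nonneg [LocallyFiniteOrderBot ι] [WellFoundedLT ι]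
    (hK : ∀ r s t, r < s → s < t → K r t ≤ K r s) (hK1 : ∀ s t, s < t → K s t ≤ 1)
    (hp0 : ∀ t, 0 ≤ p t) (hp1 : ∀ t, p t ≤ 1) (t : ι) : 0 ≤ availability K p t := by
  induction t using WellFoundedLT.induction with
  | ind t ih =>
    obtain h | h := (Iio t).eq_empty_or_nonempty
    · rw [availability_eq, h, sum_empty, sub_zero]
      exact zero_le_one
    · obtain ⟨s, hs, hmax⟩ := (Iio t).exists_max_image id h
      have hst : s < t := mem_Iio.mp hs
      have covBy : s ⋖ t := ⟨hst, fun r hsr hrt ↦ hsr.not_ge (hmax r (mem_Iio.mpr hrt))⟩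
      have mul_le_one : p s * K s t ≤ 1 :=
        (mul_le_of_le_one_right (hp0 s) (hK1 s t hst)).trans (hp1 s)
      exact (mul_nonneg (sub_nonneg.mpr mul_le_one) (ih s hst)).trans <|
        one_sub_mul_availability_le_of_covBy covBy (fun r hr ↦ hK r s t hr hst)
          fun r hr ↦ mul_nonneg (hp0 r) (ih r (hr.trans hst))

theorem marginalValue_nonneg [LocallyFiniteOrderTop ι] [WellFoundedGT ι]
    (hK : ∀ s t u, s < t → t < u → K s u ≤ K t u) (hK1 : ∀ s t, s < t → K s t ≤ 1)
    (hp0 : ∀ t, 0 ≤ p t) (hp1 : ∀ t, p t ≤ 1) (t : ι) : 0 ≤ marginalValue K p t :=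
  availability_nonneg (ι := ιᵒᵈ) (fun u t s htu hst ↦ hK s t u hst htu)
    (fun t s hst ↦ hK1 s t hst) (fun t ↦ hp0 (ofDual t)) (fun t ↦ hp1 (ofDual t)) (toDual t)

theorem fluid_monotonicity_general [Fintype ι] [LocallyFiniteOrderBot ι] [LocallyFiniteOrderTop ι]
    (hK : ∀ r s t u, r ≤ s → s < t → t ≤ u → K r u ≤ K s t) (hK1 : ∀ s t, s < t → K s t ≤ 1)
    (hp : ∀ t, 0 ≤ p t) (hp' : ∀ t, p' t ≤ 1) (hle : ∀ t, p t ≤ p' t) :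
    ∑ t, p t * availability K p t ≤ ∑ t, p' t * availability K p' t := by
  have η_nonneg : ∀ t, 0 ≤ availability K p t :=
    availability_nonneg (fun r s t hrs hst ↦ hK r r s t le_rfl hrs hst.le) hK1 hp
      fun t ↦ (hle t).trans (hp' t)
  have w_nonneg : ∀ t, 0 ≤ marginalValue K p' t :=
    marginalValue_nonneg (fun s t u hst htu ↦ hK s t u u hst.le htu le_rfl) hK1
      (fun t ↦ (hp t).trans (hle t)) hp'
  rw [← sub_nonneg, sum_mul_availability_sub_sum_mul_availability]
  exact sum_nonneg fun t _ ↦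
    mul_nonneg (mul_nonneg (sub_nonneg.mpr (hle t)) (η_nonneg t)) (w_nonneg t)

end Order

theorem fluidEta_eq_availability (F : ℝ → ℝ) (σ p : ℕ → ℝ) {T : ℕ} (t : Fin T) :
    fluidEta F σ p t =
      availability (fun s t : Fin T ↦ 1 - F (σ t - σ s)) (fun t ↦ p t) t := by
  induction t using WellFoundedLT.induction with
  | ind t ih =>
    rw [fluidEta, availability_eq,
      sum_attach (range t) fun s ↦ p s * fluidEta F σ p s * (1 - F (σ t - σ s)),
      ← Nat.Iio_eq_range, ← Fin.map_valEmbedding_Iio, sum_map]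
    exact congrArg (1 - ·) <| sum_congr rfl fun s hs ↦ by rw [← ih s (mem_Iio.mp hs)]; rfl

/-- **Monotonicity Property** (fluid form of Lemma `monotone`): the total reward
`Σ_t p_t · η_t` of the fluid `(F, σ, p)` process is monotone in the probability
vector `p`. -/
theorem fluid_monotonicity
    (T : ℕ) (hT : 1 ≤ T) (σ : ℕ → ℝ)
    (hσ : ∀ s t, s < t → t < T → σ s < σ t)
    (F : ℝ → ℝ) (hF : Monotone F) (hF0 : ∀ x, 0 ≤ F x) (hF1 : ∀ x, F x ≤ 1)
    (p p' : ℕ → ℝ)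
    (hp : ∀ t, t < T → 0 ≤ p t ∧ p t ≤ 1)
    (hp' : ∀ t, t < T → 0 ≤ p' t ∧ p' t ≤ 1)
    (hle : ∀ t, t < T → p t ≤ p' t) :
    ∑ t ∈ Finset.range T, p t * fluidEta F σ p t ≤
      ∑ t ∈ Finset.range T, p' t * fluidEta F σ p' t := by
  have σ_mono : Monotone fun t : Fin T ↦ σ t :=
    StrictMono.monotone fun s t hst ↦ hσ s t hst t.isLt
  simp only [sum_range, fluidEta_eq_availability]
  exact fluid_monotonicity_general
    (fun r s t u hrs _ htu ↦ sub_le_sub_left (hF (sub_le_sub (σ_mono htu) (σ_mono hrs))) 1)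
    (fun s t _ ↦ sub_le_self 1 (hF0 _))
    (fun t ↦ (hp t t.isLt).1) (fun t ↦ (hp' t t.isLt).2) (fun t ↦ hle t t.isLt)
end

section
/- Fix an integer T ≥ 1, real arrival times σ_1 < σ_2 < ⋯ < σ_T, and a nondecreasing function F : ℝ → ℝ with 0 ≤ F(x) ≤ 1 for all x. Let p ∈ [0,1]^T with availability sequence η of the fluid (F, σ, p) process, and let Z ⊆ {1,…,T} be a set of indices such that η_t = 0 for every t ∈ Z. Define p' by p'_t = 1 for t ∈ Z and p'_t = p_t otherwise, and let η' be the availability sequence of the fluid (F, σ, p') process. Then η'_t = η_t for every t ∈ {1,…,T}, and consequently Σ_{t=1}^{T} p'_t · η'_t = Σ_{t=1}^{T} p_t · η_t. -/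
/-- The total reward `r(F, σ, p)` of the fluid `(F, σ, p)` process, with its horizon, the number `T`
of arrivals, as an explicit argument; the arrivals are `0, …, T - 1`. -/
noncomputable def fluidReward (F : ℝ → ℝ) (σ p : ℕ → ℝ) (T : ℕ) : ℝ :=
  ∑ t ∈ Finset.range T, p t * fluidEta F σ p t

section

variable {F : ℝ → ℝ} {σ p q : ℕ → ℝ}

theorem fluidEta_eq_one_sub_sum (F : ℝ → ℝ) (σ p : ℕ → ℝ) (t : ℕ) :
    fluidEta F σ p t =
      1 - ∑ τ ∈ Finset.range t, p τ * fluidEta F σ p τ * (1 - F (σ t - σ τ)) := by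
  rw [fluidEta, Finset.sum_attach (Finset.range t)
    fun τ ↦ p τ * fluidEta F σ p τ * (1 - F (σ t - σ τ))]

/-- Earlier probabilities enter `η_t` only through the consumed fractions `p_τ η_τ`. -/
theorem fluidEta_congr {t : ℕ}
    (h : ∀ τ < t, q τ * fluidEta F σ p τ = p τ * fluidEta F σ p τ) :
    fluidEta F σ q t = fluidEta F σ p t := by
  induction t using Nat.strong_induction_on with
  | _ t ih =>
    have consumed_eq : ∀ τ < t, q τ * fluidEta F σ q τ = p τ * fluidEta F σ p τ := fun τ hτ ↦ by
      rw [ih τ hτ fun s hs ↦ h s (hs.trans hτ), h τ hτ]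
    rw [fluidEta_eq_one_sub_sum F σ q, fluidEta_eq_one_sub_sum F σ p]
    congr 1
    exact Finset.sum_congr rfl fun τ hτ ↦ by rw [consumed_eq τ (Finset.mem_range.mp hτ)]

theorem fluidReward_congr {T : ℕ}
    (h : ∀ t < T, q t * fluidEta F σ p t = p t * fluidEta F σ p t) :
    fluidReward F σ q T = fluidReward F σ p T :=
  Finset.sum_congr rfl fun t ht ↦ by
    have ht : t < T := Finset.mem_range.mp ht
    rw [fluidEta_congr fun τ hτ ↦ h τ (hτ.trans ht), h t ht]

theorem fluid_zero_probability_points_general {T : ℕ}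
    (h : ∀ t < T, fluidEta F σ p t ≠ 0 → q t = p t) :
    (∀ t < T, fluidEta F σ q t = fluidEta F σ p t) ∧
      fluidReward F σ q T = fluidReward F σ p T := by
  have consumed_eq : ∀ t < T, q t * fluidEta F σ p t = p t * fluidEta F σ p t := fun t ht ↦
    mul_eq_mul_right_iff.mpr (or_iff_not_imp_right.mpr (h t ht))
  exact ⟨fun t ht ↦ fluidEta_congr fun τ hτ ↦ consumed_eq τ (hτ.trans ht),
    fluidReward_congr consumed_eq⟩

end

/-- **Adding Zero Probability Points** (fluid form of Lemma `zeroset`): raising to `1`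
the probabilities at arrivals where no fraction of the resource is available changes
neither the availability sequence nor the total reward. -/
theorem fluid_zero_probability_points
    (T : ℕ) (hT : 1 ≤ T) (σ : ℕ → ℝ)
    (hσ : ∀ s t, s < t → t < T → σ s < σ t)
    (F : ℝ → ℝ) (hF : Monotone F) (hF0 : ∀ x, 0 ≤ F x) (hF1 : ∀ x, F x ≤ 1)
    (p : ℕ → ℝ) (hp : ∀ t, t < T → 0 ≤ p t ∧ p t ≤ 1)
    (Z : Finset ℕ) (hZ : ∀ t ∈ Z, t < T)
    (hzero : ∀ t ∈ Z, fluidEta F σ p t = 0) :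
    (∀ t, t < T →
        fluidEta F σ (fun s => if s ∈ Z then 1 else p s) t = fluidEta F σ p t) ∧
    ∑ t ∈ Finset.range T,
        (if t ∈ Z then 1 else p t) * fluidEta F σ (fun s => if s ∈ Z then 1 else p s) t
      = ∑ t ∈ Finset.range T, p t * fluidEta F σ p t :=
  fluid_zero_probability_points_general fun t _ ht ↦ if_neg (mt (hzero t) ht)
end

section
/- Fix an integer T ≥ 1, real arrival times σ_1 < σ_2 < ⋯ < σ_T, a nondecreasing function F : ℝ → ℝ with 0 ≤ F(x) ≤ 1 for all x, and p ∈ [0,1]^T, and let η be the availability sequence of the fluid (F, σ, p) process. Then 0 ≤ η_t ≤ 1 for every t ∈ {1,…,T}, and moreover η_t ≥ (1 − p_{t−1}) · η_{t−1} for every t ∈ {2,…,T}. -/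
/-! Between consecutive arrivals the terms already in the sum can only shrink, and the one new term
is at most `p t * η t`. Hence `η (t + 1) ≥ (1 - p t) * η t`, and nonnegativity propagates along the
sequence; this in turn makes every subtracted term nonnegative, so that `η` never exceeds `1`. -/

/-- `η` is the availability sequence of a resource of which a fraction `p t` of the available part
is consumed at arrival `t`. The usage times enter through a kernel: `κ t τ` is the fraction of what
was consumed at arrival `τ` that is still in use at arrival `t`. The fluid `(F, σ, p)` process has
`κ t τ = 1 - F (σ t - σ τ)`. -/
def IsAvailability {R : Type*} [Ring R] (κ : ℕ → ℕ → R) (p η : ℕ → R) : Prop :=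
  ∀ t, η t = 1 - ∑ τ ∈ Finset.range t, p τ * η τ * κ t τ

namespace IsAvailability

variable {R : Type*} [Ring R] [PartialOrder R] [IsOrderedRing R]
  {κ : ℕ → ℕ → R} {p η : ℕ → R} {t : ℕ}

theorem one_sub_mul_le_succ (h : IsAvailability κ p η)
    (hp : ∀ τ ≤ t, 0 ≤ p τ) (hη : ∀ τ ≤ t, 0 ≤ η τ)
    (hκ_succ : ∀ τ < t, κ (t + 1) τ ≤ κ t τ) (hκ_le_one : κ (t + 1) t ≤ 1) :
    (1 - p t) * η t ≤ η (t + 1) := by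
  have hconsumed : ∀ τ ≤ t, 0 ≤ p τ * η τ := fun τ hτ => mul_nonneg (hp τ hτ) (hη τ hτ)
  have hold : ∑ τ ∈ Finset.range t, p τ * η τ * κ (t + 1) τ ≤
      ∑ τ ∈ Finset.range t, p τ * η τ * κ t τ :=
    Finset.sum_le_sum fun τ hτ =>
      have hτt := Finset.mem_range.mp hτ
      mul_le_mul_of_nonneg_left (hκ_succ τ hτt) (hconsumed τ hτt.le)
  have hnew : p t * η t * κ (t + 1) t ≤ p t * η t :=
    mul_le_of_le_one_right (hconsumed t le_rfl) hκ_le_one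
  calc (1 - p t) * η t = η t - p t * η t := one_sub_mul _ _
    _ = 1 - (∑ τ ∈ Finset.range t, p τ * η τ * κ t τ + p t * η t) := by
      rw [← sub_sub, ← h t]
    _ ≤ 1 - (∑ τ ∈ Finset.range t, p τ * η τ * κ (t + 1) τ + p t * η t * κ (t + 1) t) :=
      sub_le_sub_left (add_le_add hold hnew) 1
    _ = η (t + 1) := by rw [h (t + 1), Finset.sum_range_succ]

theorem nonneg (h : IsAvailability κ p η) (hp : ∀ s < t, 0 ≤ p s ∧ p s ≤ 1)
    (hκ_succ : ∀ s < t, ∀ τ < s, κ (s + 1) τ ≤ κ s τ)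
    (hκ_le_one : ∀ s < t, κ (s + 1) s ≤ 1) : 0 ≤ η t := by
  induction t using Nat.strong_induction_on with
  | _ t ih =>
    have hη : ∀ s < t, 0 ≤ η s := fun s hs =>
      ih s hs (fun r hr => hp r (hr.trans hs)) (fun r hr => hκ_succ r (hr.trans hs))
        fun r hr => hκ_le_one r (hr.trans hs)
    cases t with
    | zero => simp [h 0]
    | succ t =>
      have ht := Nat.lt_succ_self t
      calc 0 ≤ (1 - p t) * η t := mul_nonneg (sub_nonneg.mpr (hp t ht).2) (hη t ht)
        _ ≤ η (t + 1) := h.one_sub_mul_le_succ (fun τ hτ => (hp τ (Nat.lt_succ_of_le hτ)).1)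
          (fun τ hτ => hη τ (Nat.lt_succ_of_le hτ)) (hκ_succ t ht) (hκ_le_one t ht)

theorem le_one (h : IsAvailability κ p η) (hp : ∀ τ < t, 0 ≤ p τ) (hη : ∀ τ < t, 0 ≤ η τ)
    (hκ : ∀ τ < t, 0 ≤ κ t τ) : η t ≤ 1 := by
  rw [h t]
  refine sub_le_self 1 (Finset.sum_nonneg fun τ hτ => ?_)
  have hτt := Finset.mem_range.mp hτ
  exact mul_nonneg (mul_nonneg (hp τ hτt) (hη τ hτt)) (hκ τ hτt)

end IsAvailability

theorem isAvailability_fluidEta (F : ℝ → ℝ) (σ p : ℕ → ℝ) :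
    IsAvailability (fun t τ => 1 - F (σ t - σ τ)) p (fluidEta F σ p) := fun t => by
  rw [fluidEta, Finset.sum_attach (Finset.range t)
    fun τ => p τ * fluidEta F σ p τ * (1 - F (σ t - σ τ))]

theorem fluid_eta_bounds_general {R : Type*} [Ring R] [PartialOrder R] [IsOrderedRing R]
    {κ : ℕ → ℕ → R} {p η : ℕ → R} {T : ℕ} (h : IsAvailability κ p η)
    (hp : ∀ t, t + 1 < T → 0 ≤ p t ∧ p t ≤ 1)
    (hκ_nonneg : ∀ t < T, ∀ τ < t, 0 ≤ κ t τ)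
    (hκ_succ : ∀ t, t + 1 < T → ∀ τ < t, κ (t + 1) τ ≤ κ t τ)
    (hκ_le_one : ∀ t, t + 1 < T → κ (t + 1) t ≤ 1) :
    (∀ t < T, 0 ≤ η t ∧ η t ≤ 1) ∧ ∀ t, t + 1 < T → (1 - p t) * η t ≤ η (t + 1) := by
  have hη : ∀ t < T, 0 ≤ η t := fun t ht =>
    h.nonneg (fun s hs => hp s (by lia)) (fun s hs => hκ_succ s (by lia))
      fun s hs => hκ_le_one s (by lia)
  refine ⟨fun t ht => ⟨hη t ht, ?_⟩, fun t ht => ?_⟩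
  · exact h.le_one (fun τ hτ => (hp τ (by lia)).1) (fun τ hτ => hη τ (hτ.trans ht))
      (hκ_nonneg t ht)
  · exact h.one_sub_mul_le_succ (fun τ hτ => (hp τ (by lia)).1) (fun τ hτ => hη τ (by lia))
      (hκ_succ t ht) (hκ_le_one t ht)

/-- **Well-definedness of the fluid process**: the available fraction always lies in
`[0,1]`, and it decreases at each arrival by at most the consumed amount, i.e.
`η_t ≥ (1 − p_{t−1}) · η_{t−1}`. -/
theorem fluid_eta_bounds
    (T : ℕ) (hT : 1 ≤ T) (σ : ℕ → ℝ)
    (hσ : ∀ s t, s < t → t < T → σ s < σ t)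
    (F : ℝ → ℝ) (hF : Monotone F) (hF0 : ∀ x, 0 ≤ F x) (hF1 : ∀ x, F x ≤ 1)
    (p : ℕ → ℝ) (hp : ∀ t, t < T → 0 ≤ p t ∧ p t ≤ 1) :
    (∀ t, t < T → 0 ≤ fluidEta F σ p t ∧ fluidEta F σ p t ≤ 1) ∧
    (∀ t, 1 ≤ t → t < T →
        (1 - p (t - 1)) * fluidEta F σ p (t - 1) ≤ fluidEta F σ p t) := by
  obtain ⟨hbounds, hstep⟩ := fluid_eta_bounds_general (isAvailability_fluidEta F σ p)
    (fun t ht => hp t (Nat.lt_of_succ_lt ht)) (fun _ _ _ _ => sub_nonneg.mpr (hF1 _))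
    (fun t ht _ _ => sub_le_sub_left (hF (sub_le_sub_right (hσ t _ t.lt_succ_self ht).le _)) 1)
    fun _ _ => sub_le_self 1 (hF0 _)
  exact ⟨hbounds, fun | t + 1, _, ht => hstep t ht⟩
end

section
/- For every integer n ≥ 1, there do not exist nonnegative reals θ₁(t) for t ∈ {1, …, 3n} and θ₂(t) for t ∈ {2n+1, …, 4n} satisfying simultaneously: (a) θ₁(2n) + (1/2)·Σ_{τ=2n+1}^{3n} θ₁(τ) ≥ 1 − 1/e; (b) θ₁(t) + (1/2)·Σ_{τ=t+1}^{3n} θ₁(τ) ≥ e^{−1/2} − e^{−1} for every t ∈ {2n+1, …, 3n}; (c) θ₂(4n) ≥ 1 − 1/e; and (d) Σ_{t=1}^{3n} θ₁(t) + Σ_{t=2n+1}^{4n} θ₂(t) ≤ 3/2 − 3/e + e^{−1/2}. -/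
/-!
Discounting future duals can only lower a constraint's left-hand side, so the `θ₁` constraint at
`t₁` and the `θ₂` constraint at `t₂` each force a total dual mass of at least `1 - e⁻¹`. With
`x = e^(-1/2)`, these two masses together exceed the budget `3/2 - 3x² + x` by at least
`x² - x + 1/2 = (x - 1/2)² + 1/4 > 0`.
-/

theorem add_mul_sum_le_sum {ι R : Type*} [Semiring R] [PartialOrder R] [IsOrderedRing R]
    {s t : Finset ι} {a : ι} {f : ι → R} {c : R} (ha : a ∈ s) (hat : a ∉ t) (hts : t ⊆ s)
    (hf : ∀ i ∈ s, 0 ≤ f i) (hc : c ≤ 1) :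
    f a + c * ∑ i ∈ t, f i ≤ ∑ i ∈ s, f i := by
  have hsum : 0 ≤ ∑ i ∈ t, f i := Finset.sum_nonneg fun i hi => hf i (hts hi)
  calc
    f a + c * ∑ i ∈ t, f i ≤ f a + ∑ i ∈ t, f i := by
      gcongr
      exact mul_le_of_le_one_left hsum hc
    _ = ∑ i ∈ Finset.cons a t hat, f i := (Finset.sum_cons hat).symm
    _ ≤ ∑ i ∈ s, f i :=
      Finset.sum_le_sum_of_subset_of_nonneg (Finset.cons_subset.2 ⟨ha, hts⟩) fun i hi _ => hf i hi

theorem exp_le_exp_two_mul_add_quarter (x : ℝ) : Real.exp x ≤ Real.exp (2 * x) + 1 / 4 := by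
  have hsq : Real.exp (2 * x) = Real.exp x ^ 2 := Real.exp_nat_mul x 2
  linarith [sq_nonneg (Real.exp x - 1 / 2)]

theorem primal_dual_budget_lt :
    3 / 2 - 3 * Real.exp (-1) + Real.exp (-(1 / 2)) < 2 * (1 - Real.exp (-1)) := by
  have hexp : Real.exp (-(1 / 2)) ≤ Real.exp (-1) + 1 / 4 := by
    convert exp_le_exp_two_mul_add_quarter (-(1 / 2)) using 3
    norm_num
  linarith

theorem primal_dual_infeasible_general {a t₁ b c t₂ d : ℕ} {δ : ℝ}
    (hat₁ : a ≤ t₁) (ht₁b : t₁ ≤ b) (hct₂ : c ≤ t₂) (ht₂d : t₂ ≤ d) (hδ : δ ≤ 1) :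
    ¬ ∃ (θ₁ θ₂ : ℕ → ℝ),
      (∀ t, a ≤ t → t ≤ b → 0 ≤ θ₁ t) ∧
      (∀ t, c ≤ t → t ≤ d → 0 ≤ θ₂ t) ∧
      (1 - Real.exp (-1) ≤ θ₁ t₁ + δ * ∑ τ ∈ Finset.Icc (t₁ + 1) b, θ₁ τ) ∧
      (1 - Real.exp (-1) ≤ θ₂ t₂) ∧
      (∑ t ∈ Finset.Icc a b, θ₁ t + ∑ t ∈ Finset.Icc c d, θ₂ t
        ≤ 3 / 2 - 3 * Real.exp (-1) + Real.exp (-(1 / 2))) := by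
  rintro ⟨θ₁, θ₂, hθ₁, hθ₂, hreuse, hlast, hbudget⟩
  have hmass₁ : 1 - Real.exp (-1) ≤ ∑ t ∈ Finset.Icc a b, θ₁ t :=
    hreuse.trans <| add_mul_sum_le_sum (Finset.mem_Icc.2 ⟨hat₁, ht₁b⟩) (by simp)
      (Finset.Icc_subset_Icc_left (by omega))
      (fun t ht => hθ₁ t (Finset.mem_Icc.1 ht).1 (Finset.mem_Icc.1 ht).2) hδ
  have hmass₂ : 1 - Real.exp (-1) ≤ ∑ t ∈ Finset.Icc c d, θ₂ t :=
    hlast.trans <| Finset.single_le_sum (f := θ₂)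
      (fun t ht => hθ₂ t (Finset.mem_Icc.1 ht).1 (Finset.mem_Icc.1 ht).2)
      (Finset.mem_Icc.2 ⟨hct₂, ht₂d⟩)
  linarith [primal_dual_budget_lt]

/-- **Infeasibility of the primal-dual system** (core of Lemma `primalimpossible`):
the linear system arising from the classical primal-dual certificate for Balance on
the fluid two-point reusability instance has no nonnegative solution. -/
theorem primal_dual_infeasible (n : ℕ) (hn : 1 ≤ n) :
    ¬ ∃ (θ₁ θ₂ : ℕ → ℝ),
      (∀ t, 1 ≤ t → t ≤ 3 * n → 0 ≤ θ₁ t) ∧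
      (∀ t, 2 * n + 1 ≤ t → t ≤ 4 * n → 0 ≤ θ₂ t) ∧
      (1 - Real.exp (-1) ≤
        θ₁ (2 * n) + (1 / 2) * ∑ τ ∈ Finset.Icc (2 * n + 1) (3 * n), θ₁ τ) ∧
      (∀ t, 2 * n + 1 ≤ t → t ≤ 3 * n →
        Real.exp (-(1 / 2)) - Real.exp (-1) ≤
          θ₁ t + (1 / 2) * ∑ τ ∈ Finset.Icc (t + 1) (3 * n), θ₁ τ) ∧
      (1 - Real.exp (-1) ≤ θ₂ (4 * n)) ∧
      (∑ t ∈ Finset.Icc 1 (3 * n), θ₁ t + ∑ t ∈ Finset.Icc (2 * n + 1) (4 * n), θ₂ t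
        ≤ 3 / 2 - 3 * Real.exp (-1) + Real.exp (-(1 / 2))) := by
  rintro ⟨θ₁, θ₂, hθ₁, hθ₂, hreuse, -, hlast, hbudget⟩
  exact primal_dual_infeasible_general (by omega) (by omega) (by omega) le_rfl (by norm_num)
    ⟨θ₁, θ₂, hθ₁, hθ₂, hreuse, hlast, hbudget⟩
end
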